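/- arXiv:2205.10552 — 5 statements merged into one kernel-verified Lean document; each statement's English description precedes it below -/
import Mathlib

section
/- Let 𝒞 ⊆ 𝔽₂ⁿ be a k-dimensional linear code and f a probability distribution on 𝔽₂ⁿ. Let u_full be the uniform distribution on 𝔽₂ⁿ, u_𝒞 the uniform distribution on 𝒞, and (u_𝒞 ⋆ f)(x) = Σ_{y∈𝔽₂ⁿ} u_𝒞(x−y)·f(y) their convolution. Then Δ(u_full, u_𝒞 ⋆ f) = Δ(u, f^𝒞). -/
open scoped BigOperators
open scoped Classical

attribute [local instance] Fintype.ofFinite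

/-- Statistical distance between two functions on a finite set. -/
noncomputable def statDist {S : Type*} [Fintype S] (f g : S → ℝ) : ℝ :=
  (1 / 2) * ∑ x : S, |f x - g x|

/-- `f^𝒞`, the periodization of `f` over the code `𝒞`: on a coset `x̄` it is
`Σ_{c ∈ 𝒞} f(x + c)`, i.e. the sum of `f` over the coset. -/
noncomputable def periodize {n : ℕ} (C : Submodule (ZMod 2) (Fin n → ZMod 2))
    (f : (Fin n → ZMod 2) → ℝ) : ((Fin n → ZMod 2) ⧸ C) → ℝ :=
  fun xbar => ∑ y : Fin n → ZMod 2,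
    if (Submodule.Quotient.mk y : (Fin n → ZMod 2) ⧸ C) = xbar then f y else 0

/-- The uniform distribution on the quotient `𝔽₂ⁿ/𝒞`. -/
noncomputable def unifQuot {n : ℕ} (C : Submodule (ZMod 2) (Fin n → ZMod 2)) :
    ((Fin n → ZMod 2) ⧸ C) → ℝ :=
  fun _ => (Nat.card ((Fin n → ZMod 2) ⧸ C) : ℝ)⁻¹

/-- Convolution of two functions on `𝔽₂ⁿ`. -/
noncomputable def convF2 {n : ℕ} (f g : (Fin n → ZMod 2) → ℝ) : (Fin n → ZMod 2) → ℝ :=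
  fun x => ∑ y : Fin n → ZMod 2, f (x - y) * g y

/-!
Both `u_full` and `u_𝒞 ⋆ f` are constant on the cosets of `𝒞`, where their values are `|𝒞|⁻¹` times
those of `u` and `f^𝒞`. Each coset has `|𝒞|` elements, so the two factors cancel in the `ℓ¹` norm.
-/

section FiniteModule

variable {R M : Type*} [Ring R] [AddCommGroup M] [Module R M] (C : Submodule R M)

/-- The uniform distribution on the submodule `C`, extended by zero to the whole module; it is
identically zero for infinite `C`, where `Nat.card C = 0`. -/
noncomputable def unifSubmodule : M → ℝ :=
  fun x => if x ∈ C then (Nat.card C : ℝ)⁻¹ else 0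

theorem inv_card_eq_inv_card_mul_inv_card_quotient :
    (Nat.card M : ℝ)⁻¹ = (Nat.card C : ℝ)⁻¹ * (Nat.card (M ⧸ C) : ℝ)⁻¹ := by
  rw [C.card_eq_card_quotient_mul_card, Nat.cast_mul, mul_inv]

variable [Fintype M]

/-- Convolution of two functions on a finite abelian group, with respect to counting measure;
on `𝔽₂ⁿ` this is `convF2`. -/
noncomputable def addConv (f g : M → ℝ) : M → ℝ :=
  fun x => ∑ y : M, f (x - y) * g y

/-- The function on `M ⧸ C` sending each coset to the sum of `f` over it; for a code in `𝔽₂ⁿ`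
this is `periodize`. -/
noncomputable def cosetSum (f : M → ℝ) : M ⧸ C → ℝ :=
  fun q => ∑ y : M, if Submodule.Quotient.mk y = q then f y else 0

theorem sum_comp_quotient_mk {A : Type*} [AddCommMonoid A] (g : M ⧸ C → A) :
    ∑ x : M, g (Submodule.Quotient.mk x) = Nat.card C • ∑ q, g q := by
  let e : M ≃ (M ⧸ C) × C :=
    AddSubgroup.addGroupEquivQuotientProdAddSubgroup (s := C.toAddSubgroup)
  calc
    ∑ x : M, g (Submodule.Quotient.mk x) = ∑ p : (M ⧸ C) × C, g p.1 :=
      e.sum_comp fun p => g p.1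
    _ = ∑ q, Nat.card C • g q := by
      simp only [Fintype.sum_prod_type, Finset.sum_const, Finset.card_univ,
        Nat.card_eq_fintype_card]
    _ = Nat.card C • ∑ q, g q := Finset.sum_nsmul ..

theorem statDist_inv_card_mul_comp_quotient_mk (p q : M ⧸ C → ℝ) :
    statDist (fun x : M => (Nat.card C : ℝ)⁻¹ * p (Submodule.Quotient.mk x))
        (fun x : M => (Nat.card C : ℝ)⁻¹ * q (Submodule.Quotient.mk x)) =
      statDist p q := by
  have card_ne_zero : (Nat.card C : ℝ) ≠ 0 := Nat.cast_ne_zero.2 Nat.card_pos.ne'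
  unfold statDist
  congr 1
  simp only [← mul_sub, abs_mul, abs_inv, Nat.abs_cast, ← Finset.mul_sum]
  rw [sum_comp_quotient_mk C fun c => |p c - q c|, nsmul_eq_mul,
    inv_mul_cancel_left₀ card_ne_zero]

theorem addConv_unifSubmodule (f : M → ℝ) :
    addConv (unifSubmodule C) f =
      fun x => (Nat.card C : ℝ)⁻¹ * cosetSum C f (Submodule.Quotient.mk x) := by
  funext x
  have mk_eq_mk_iff (y : M) :
      (Submodule.Quotient.mk y : M ⧸ C) = Submodule.Quotient.mk x ↔ x - y ∈ C := by
    rw [eq_comm, Submodule.Quotient.eq]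
  simp only [addConv, unifSubmodule, cosetSum, mk_eq_mk_iff, Finset.mul_sum, ite_mul, mul_ite,
    zero_mul, mul_zero]

theorem statDist_conv_eq_statDist_quot_general (f : M → ℝ) :
    statDist (fun _ : M => (Nat.card M : ℝ)⁻¹) (addConv (unifSubmodule C) f) =
      statDist (fun _ : M ⧸ C => (Nat.card (M ⧸ C) : ℝ)⁻¹) (cosetSum C f) := by
  rw [addConv_unifSubmodule, inv_card_eq_inv_card_mul_inv_card_quotient C]
  exact statDist_inv_card_mul_comp_quotient_mk C
    (fun _ => (Nat.card (M ⧸ C) : ℝ)⁻¹) (cosetSum C f)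

end FiniteModule

/-- For a `k`-dimensional linear code `𝒞 ⊆ 𝔽₂ⁿ` and a probability distribution `f`,
`Δ(u_full, u_𝒞 ⋆ f) = Δ(u, f^𝒞)`. -/
theorem statDist_conv_eq_statDist_quot {n k : ℕ} (C : Submodule (ZMod 2) (Fin n → ZMod 2))
    (hk : Module.finrank (ZMod 2) C = k)
    (f : (Fin n → ZMod 2) → ℝ) (hf0 : ∀ x, 0 ≤ f x)
    (hf1 : ∑ x : Fin n → ZMod 2, f x = 1) :
    statDist (fun _ : Fin n → ZMod 2 => ((2 : ℝ) ^ n)⁻¹)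
        (convF2 (fun x => if x ∈ C then (Nat.card C : ℝ)⁻¹ else 0) f) =
      statDist (unifQuot C) (periodize C f) := by
  rw [show (2 : ℝ) ^ n = Nat.card (Fin n → ZMod 2) by simp]
  exact statDist_conv_eq_statDist_quot_general C f
end

section
/- Fix integers 1 ≤ k ≤ n and 0 ≤ w ≤ n. Sample a uniformly random matrix G ∈ 𝔽₂^{k×n} and let 𝒞 = {mG : m ∈ 𝔽₂^k}. Let f_unif,w be the uniform distribution on the Hamming sphere 𝒮_w = {x ∈ 𝔽₂ⁿ : |x| = w}. Then E_G[Δ(u, f_unif,w^𝒞)] ≤ √( 2^{n−k} / C(n,w) ). -/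
open scoped BigOperators
open scoped Classical

attribute [local instance] Fintype.ofFinite

/-- The uniform distribution on the Hamming sphere of radius `w` in `𝔽₂ⁿ`. -/
noncomputable def funif (n w : ℕ) : (Fin n → ZMod 2) → ℝ :=
  fun x => if hammingNorm x = w then ((n.choose w : ℝ))⁻¹ else 0

/-- The code generated by the matrix `G`, i.e. `{mG : m ∈ 𝔽₂ᵏ}`. -/
def codeOf {n k : ℕ} (G : Matrix (Fin k) (Fin n) (ZMod 2)) :
    Submodule (ZMod 2) (Fin n → ZMod 2) :=
  LinearMap.range (Matrix.vecMulLinear G)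

/-!
Write `f̃ = f - 𝔼 f`. For `C = {mG}` the distance of `f^C` from uniform is half the `ℓ¹` norm of
`x ↦ 𝔼 m, f̃ (x + mG)`. If `m ≠ m'` then `m'G - mG` is uniform for random `G`, so the translates
of `f̃` by `mG` and `m'G` are orthogonal on average, and averaging over the `2 ^ k` messages `m`
divides the second moment by `2 ^ k`. Cauchy–Schwarz passes from the second moment to the `ℓ¹` norm.
-/

section Averages

theorem expect_comp_of_surjective {A B E : Type*} [AddGroup A] [AddGroup B] [Fintype A] [Fintype B]
    [AddCommMonoid E] [Module ℚ≥0 E] (φ : A →+ B) (hφ : Function.Surjective φ) (F : B → E) :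
    𝔼 a, F (φ a) = 𝔼 b, F b := by
  have average_over_A (b : B) : 𝔼 a, F (b + φ a) = 𝔼 a, F (φ a) := by
    obtain ⟨a', rfl⟩ := hφ b
    exact Fintype.expect_equiv (Equiv.addLeft a') _ _ fun a => by simp
  have average_over_B (a : A) : 𝔼 b, F (b + φ a) = 𝔼 b, F b :=
    Fintype.expect_equiv (Equiv.addRight (φ a)) _ _ fun _ => rfl
  calc 𝔼 a, F (φ a)
      = 𝔼 b, 𝔼 a, F (b + φ a) := by simp only [average_over_A, Fintype.expect_const]
    _ = 𝔼 a, 𝔼 b, F (b + φ a) := Finset.expect_comm ..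
    _ = 𝔼 b, F b := by simp only [average_over_B, Fintype.expect_const]

theorem sq_expect_abs_le_expect_sq {ι : Type*} (s : Finset ι) (f : ι → ℝ) :
    (𝔼 i ∈ s, |f i|) ^ 2 ≤ 𝔼 i ∈ s, f i ^ 2 := by
  obtain rfl | hs := s.eq_empty_or_nonempty
  · simp
  · simpa [hs] using Finset.expect_mul_sq_le_sq_mul_sq s (fun i => |f i|) 1

theorem expect_sq_balance_le {ι : Type*} [Fintype ι] (f : ι → ℝ) :
    𝔼 x, Fintype.balance f x ^ 2 ≤ 𝔼 x, f x ^ 2 := by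
  have pythagoras : 𝔼 x, f x ^ 2 = 𝔼 x, Fintype.balance f x ^ 2 + (𝔼 x, f x) ^ 2 := by
    cases isEmpty_or_nonempty ι
    · simp
    calc 𝔼 x, f x ^ 2
        = 𝔼 x, (Fintype.balance f x ^ 2 + 2 * (𝔼 y, f y) * Fintype.balance f x
            + (𝔼 y, f y) ^ 2) :=
          Finset.expect_congr rfl fun x _ => by rw [Fintype.balance_apply]; ring
      _ = 𝔼 x, Fintype.balance f x ^ 2 + (𝔼 x, f x) ^ 2 := by
          simp only [Finset.expect_add_distrib, ← Finset.mul_expect, Fintype.expect_balance,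
            Fintype.expect_const, mul_zero, add_zero]
  rw [pythagoras]
  exact le_add_of_nonneg_right (sq_nonneg _)

end Averages

section UniformDifferences

variable {Ω M A : Type*} [Fintype Ω] [Fintype A] [AddCommGroup A]

/-- The family `X · m`, `m : M`, of `A`-valued random variables on the uniform space `Ω` has
uniform differences: for `m ≠ m'`, the variable `X · m' - X · m` is uniform on `A`. Uniformity is
expressed through averages of real test functions. -/
def HasUniformDifferences (X : Ω → M → A) : Prop :=
  ∀ ⦃m m' : M⦄, m ≠ m' → ∀ F : A → ℝ, 𝔼 ω, F (X ω m' - X ω m) = 𝔼 x, F x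

theorem expect_translate_mul_translate (g : A → ℝ) (a b : A) :
    𝔼 x, g (x + a) * g (x + b) = 𝔼 x, g x * g (x + (b - a)) :=
  Fintype.expect_equiv (Equiv.addRight a) _ _ fun x => by simp [add_assoc]

theorem HasUniformDifferences.expect_translate_mul_translate_eq_ite [Nonempty Ω] {X : Ω → M → A}
    (hX : HasUniformDifferences X) {g : A → ℝ} (hg : 𝔼 x, g x = 0) (m m' : M) :
    𝔼 ω, 𝔼 x, g (x + X ω m) * g (x + X ω m') = if m = m' then 𝔼 x, g x ^ 2 else 0 := by
  simp only [expect_translate_mul_translate]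
  split_ifs with h
  · simp [h, sq]
  · calc 𝔼 ω, 𝔼 x, g x * g (x + (X ω m' - X ω m))
        = 𝔼 x, g x * 𝔼 ω, g (x + (X ω m' - X ω m)) := by
          rw [Finset.expect_comm]
          simp only [Finset.mul_expect]
      _ = 𝔼 x, g x * 𝔼 y, g y := by
          refine Finset.expect_congr rfl fun x _ => ?_
          rw [hX h fun y => g (x + y)]
          exact congrArg _ (Fintype.expect_equiv (Equiv.addLeft x) _ _ fun _ => rfl)
      _ = 0 := by simp [hg]

theorem HasUniformDifferences.expect_sq_expect_translate [Nonempty Ω] [Fintype M] {X : Ω → M → A}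
    (hX : HasUniformDifferences X) {g : A → ℝ} (hg : 𝔼 x, g x = 0) :
    𝔼 ω, 𝔼 x, (𝔼 m, g (x + X ω m)) ^ 2 = (𝔼 x, g x ^ 2) / Fintype.card M :=
  calc 𝔼 ω, 𝔼 x, (𝔼 m, g (x + X ω m)) ^ 2
      = 𝔼 ω, 𝔼 m, 𝔼 m', 𝔼 x, g (x + X ω m) * g (x + X ω m') := by
        refine Finset.expect_congr rfl fun ω _ => ?_
        simp only [sq, Finset.expect_mul_expect]
        rw [Finset.expect_comm]
        exact Finset.expect_congr rfl fun m _ => Finset.expect_comm ..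
    _ = 𝔼 m, 𝔼 m', 𝔼 ω, 𝔼 x, g (x + X ω m) * g (x + X ω m') := by
        rw [Finset.expect_comm]
        exact Finset.expect_congr rfl fun m _ => Finset.expect_comm ..
    _ = 𝔼 m : M, 𝔼 m', if m = m' then 𝔼 x, g x ^ 2 else 0 := by
        simp only [hX.expect_translate_mul_translate_eq_ite hg]
    _ = (𝔼 x, g x ^ 2) / Fintype.card M := by
        simp only [Fintype.expect_ite_eq]
        cases isEmpty_or_nonempty M
        · simp
        · simp [NNRat.smul_def, div_eq_inv_mul]

theorem HasUniformDifferences.expect_abs_expect_translate_balance_le [Nonempty Ω] [Fintype M]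
    {X : Ω → M → A} (hX : HasUniformDifferences X) (f : A → ℝ) :
    𝔼 ω, 𝔼 x, |𝔼 m, Fintype.balance f (x + X ω m)| ≤
      √((𝔼 x, f x ^ 2) / Fintype.card M) := by
  apply Real.le_sqrt_of_sq_le
  calc (𝔼 ω, 𝔼 x, |𝔼 m, Fintype.balance f (x + X ω m)|) ^ 2
      ≤ 𝔼 ω, 𝔼 x, (𝔼 m, Fintype.balance f (x + X ω m)) ^ 2 := by
        simpa only [Finset.expect_product] using sq_expect_abs_le_expect_sq
          (Finset.univ ×ˢ Finset.univ) fun p : Ω × A => 𝔼 m, Fintype.balance f (p.2 + X p.1 m)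
    _ = (𝔼 x, Fintype.balance f x ^ 2) / Fintype.card M :=
        hX.expect_sq_expect_translate (Fintype.expect_balance f)
    _ ≤ (𝔼 x, f x ^ 2) / Fintype.card M := by
        exact div_le_div_of_nonneg_right (expect_sq_balance_le f) (Nat.cast_nonneg _)

end UniformDifferences

section RandomMatrices

variable {κ ι K : Type*} [Fintype κ] [DivisionRing K]

theorem vecMul_surjective_of_ne_zero {d : κ → K} (hd : d ≠ 0) :
    Function.Surjective fun G : Matrix κ ι K => Matrix.vecMul d G := by
  intro y
  obtain ⟨i, hi⟩ := Function.ne_iff.mp hd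
  refine ⟨Matrix.vecMulVec (Pi.single i (d i)⁻¹) y, ?_⟩
  simp only [Matrix.vecMul_vecMulVec, dotProduct_single]
  rw [mul_inv_cancel₀ hi, one_smul]

theorem hasUniformDifferences_vecMul [DecidableEq κ] [Fintype ι] [DecidableEq ι] [Fintype K] :
    HasUniformDifferences fun (G : Matrix κ ι K) (m : κ → K) => Matrix.vecMul m G := by
  intro m m' hm F
  simp only [← Matrix.sub_vecMul]
  exact expect_comp_of_surjective
    (AddMonoidHom.mk' (Matrix.vecMul (m' - m)) fun G H => Matrix.vecMul_add G H (m' - m))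
    (vecMul_surjective_of_ne_zero (sub_ne_zero.mpr hm.symm)) F

end RandomMatrices

section Periodization

variable {n k : ℕ}

theorem periodize_mk (C : Submodule (ZMod 2) (Fin n → ZMod 2)) (f : (Fin n → ZMod 2) → ℝ)
    (x : Fin n → ZMod 2) :
    periodize C f (Submodule.Quotient.mk x) = ∑ c : C, f (x + c) := by
  unfold periodize
  rw [← Equiv.sum_comp (Equiv.addLeft x)]
  simp only [Equiv.coe_addLeft, Submodule.Quotient.eq, add_sub_cancel_left]
  rw [← Finset.sum_filter]
  exact Finset.sum_subtype _ (by simp) fun c => f (x + c)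

theorem unifQuot_eq_periodize_const (C : Submodule (ZMod 2) (Fin n → ZMod 2)) :
    unifQuot C = periodize C fun _ => (Fintype.card (Fin n → ZMod 2) : ℝ)⁻¹ := by
  funext q
  obtain ⟨x, rfl⟩ := C.mkQ_surjective q
  have card_eq := C.card_eq_card_quotient_mul_card
  rw [Nat.card_eq_fintype_card] at card_eq
  rw [Submodule.mkQ_apply, periodize_mk, card_eq]
  simp only [unifQuot, Finset.sum_const, Finset.card_univ, nsmul_eq_mul, Nat.cast_mul,
    Nat.card_eq_fintype_card]
  field_simp

theorem unifQuot_sub_periodize (C : Submodule (ZMod 2) (Fin n → ZMod 2))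
    {f : (Fin n → ZMod 2) → ℝ} (hf : ∑ x, f x = 1) :
    unifQuot C - periodize C f = -periodize C (Fintype.balance f) := by
  funext q
  obtain ⟨x, rfl⟩ := C.mkQ_surjective q
  simp only [unifQuot_eq_periodize_const, Pi.sub_apply, Pi.neg_apply, Submodule.mkQ_apply,
    periodize_mk, Fintype.balance_apply, Fintype.expect_eq_sum_div_card, hf, one_div,
    Finset.sum_sub_distrib, neg_sub]

theorem sum_abs_periodize (C : Submodule (ZMod 2) (Fin n → ZMod 2)) (g : (Fin n → ZMod 2) → ℝ) :
    ∑ q, |periodize C g q| = ∑ x, |𝔼 c : C, g (x + c)| := by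
  have card_eq : (Fintype.card (Fin n → ZMod 2) : ℝ) =
      Fintype.card ((Fin n → ZMod 2) ⧸ C) * Fintype.card C := by
    simp only [Fintype.card_eq_nat_card, C.card_eq_card_quotient_mul_card, Nat.cast_mul, mul_comm]
  have abs_periodize_mk (x : Fin n → ZMod 2) :
      |periodize C g (Submodule.Quotient.mk x)| = Fintype.card C * |𝔼 c : C, g (x + c)| := by
    rw [periodize_mk, ← Fintype.card_mul_expect, abs_mul, Nat.abs_cast]
  calc ∑ q, |periodize C g q|
      = Fintype.card ((Fin n → ZMod 2) ⧸ C) * 𝔼 q, |periodize C g q| :=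
        (Fintype.card_mul_expect _).symm
    _ = Fintype.card ((Fin n → ZMod 2) ⧸ C) * 𝔼 x, |periodize C g (Submodule.Quotient.mk x)| :=
        congrArg _ (expect_comp_of_surjective C.mkQ.toAddMonoidHom C.mkQ_surjective _).symm
    _ = ∑ x, |𝔼 c : C, g (x + c)| := by
        simp only [abs_periodize_mk, ← Finset.mul_expect]
        rw [← mul_assoc, ← card_eq, Fintype.card_mul_expect]

theorem card_fun_zmod_two (n : ℕ) : (Fintype.card (Fin n → ZMod 2) : ℝ) = 2 ^ n := by
  simp [ZMod.card]

theorem expect_codeOf (G : Matrix (Fin k) (Fin n) (ZMod 2)) (F : (Fin n → ZMod 2) → ℝ) :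
    𝔼 c : codeOf G, F c = 𝔼 m, F (Matrix.vecMul m G) :=
  (expect_comp_of_surjective (B := codeOf G) (Matrix.vecMulLinear G).rangeRestrict.toAddMonoidHom
    (Matrix.vecMulLinear G).surjective_rangeRestrict fun c => F c).symm

theorem statDist_unifQuot_periodize_codeOf (G : Matrix (Fin k) (Fin n) (ZMod 2))
    {f : (Fin n → ZMod 2) → ℝ} (hf : ∑ x, f x = 1) :
    statDist (unifQuot (codeOf G)) (periodize (codeOf G) f) =
      2 ^ n / 2 * 𝔼 x, |𝔼 m, Fintype.balance f (x + Matrix.vecMul m G)| := by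
  have abs_sub_eq (q : (Fin n → ZMod 2) ⧸ codeOf G) :
      |unifQuot (codeOf G) q - periodize (codeOf G) f q| =
        |periodize (codeOf G) (Fintype.balance f) q| := by
    rw [← Pi.sub_apply, unifQuot_sub_periodize _ hf, Pi.neg_apply, abs_neg]
  have expect_code_eq (x : Fin n → ZMod 2) :
      𝔼 c : codeOf G, Fintype.balance f (x + c) =
        𝔼 m, Fintype.balance f (x + Matrix.vecMul m G) :=
    expect_codeOf G fun c => Fintype.balance f (x + c)
  simp only [statDist, abs_sub_eq, sum_abs_periodize, expect_code_eq]
  rw [← Fintype.card_mul_expect, card_fun_zmod_two]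
  ring

end Periodization

section HammingSphere

theorem card_filter_hammingNorm_eq {ι : Type*} [Fintype ι] [DecidableEq ι] (w : ℕ) :
    (Finset.univ.filter fun x : ι → ZMod 2 => hammingNorm x = w).card =
      (Fintype.card ι).choose w := by
  rw [← Finset.card_univ, ← Finset.card_powersetCard]
  refine Finset.card_nbij' (fun x => Finset.univ.filter fun i => x i ≠ 0)
    (fun s i => if i ∈ s then 1 else 0) ?_ ?_ ?_ ?_
  · intro x hx
    simpa [hammingNorm] using hx
  · intro s hs
    simpa [hammingNorm] using hs
  · intro x _
    have eq_ite_ne_zero : ∀ a : ZMod 2, (if a ≠ 0 then 1 else 0) = a := by decide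
    funext i
    simpa using eq_ite_ne_zero (x i)
  · intro s _
    ext i
    simp

variable {n w : ℕ}

theorem sum_funif (hw : w ≤ n) : ∑ x, funif n w x = 1 := by
  have choose_ne_zero : (n.choose w : ℝ) ≠ 0 := by exact_mod_cast (Nat.choose_pos hw).ne'
  simp only [funif]
  rw [← Finset.sum_filter, Finset.sum_const, card_filter_hammingNorm_eq, Fintype.card_fin,
    nsmul_eq_mul, mul_inv_cancel₀ choose_ne_zero]

theorem sum_funif_sq (hw : w ≤ n) : ∑ x, funif n w x ^ 2 = (n.choose w : ℝ)⁻¹ := by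
  have sq_eq (x : Fin n → ZMod 2) : funif n w x ^ 2 = (n.choose w : ℝ)⁻¹ * funif n w x := by
    unfold funif
    split_ifs <;> simp [sq]
  simp only [sq_eq, ← Finset.mul_sum, sum_funif hw, mul_one]

end HammingSphere

theorem expected_statDist_unif_sphere_random_code_general (n k : ℕ) {f : (Fin n → ZMod 2) → ℝ}
    (hf : ∑ x, f x = 1) :
    (∑ G : Matrix (Fin k) (Fin n) (ZMod 2),
        statDist (unifQuot (codeOf G)) (periodize (codeOf G) f)) / (2 : ℝ) ^ (k * n) ≤
      1 / 2 * √(2 ^ n / 2 ^ k * ∑ x, f x ^ 2) := by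
  have card_matrix : (Fintype.card (Matrix (Fin k) (Fin n) (ZMod 2)) : ℝ) = 2 ^ (k * n) := by
    rw [← Nat.card_eq_fintype_card]
    simp [Matrix, ZMod.card, ← pow_mul, mul_comm]
  calc (∑ G : Matrix (Fin k) (Fin n) (ZMod 2),
        statDist (unifQuot (codeOf G)) (periodize (codeOf G) f)) / (2 : ℝ) ^ (k * n)
      = 2 ^ n / 2 * 𝔼 G : Matrix (Fin k) (Fin n) (ZMod 2), 𝔼 x,
          |𝔼 m, Fintype.balance f (x + Matrix.vecMul m G)| := by
        rw [← card_matrix, ← Fintype.expect_eq_sum_div_card, Finset.mul_expect]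
        simp only [statDist_unifQuot_periodize_codeOf _ hf]
    _ ≤ 2 ^ n / 2 * √((𝔼 x, f x ^ 2) / Fintype.card (Fin k → ZMod 2)) := by
        gcongr
        exact hasUniformDifferences_vecMul.expect_abs_expect_translate_balance_le f
    _ = 1 / 2 * √((2 ^ n) ^ 2 * ((𝔼 x, f x ^ 2) / Fintype.card (Fin k → ZMod 2))) := by
        rw [Real.sqrt_mul (by positivity), Real.sqrt_sq (by positivity)]
        ring
    _ = 1 / 2 * √(2 ^ n / 2 ^ k * ∑ x, f x ^ 2) := by
        rw [Fintype.expect_eq_sum_div_card, card_fun_zmod_two, card_fun_zmod_two]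
        congr 2
        field_simp

/-- For `1 ≤ k ≤ n` and `0 ≤ w ≤ n`, the expectation over a uniform `G ∈ 𝔽₂^{k×n}` of
`Δ(u, f_unif,w^𝒞)`, where `𝒞` is the code generated by `G`, is at most
`√(2^{n−k}/C(n,w))`. -/
theorem expected_statDist_unif_sphere_random_code {n k w : ℕ} (hk1 : 1 ≤ k) (hkn : k ≤ n)
    (hw : w ≤ n) :
    (∑ G : Matrix (Fin k) (Fin n) (ZMod 2),
        statDist (unifQuot (codeOf G)) (periodize (codeOf G) (funif n w))) /
        (2 : ℝ) ^ (k * n) ≤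
      Real.sqrt ((2 : ℝ) ^ (n - k) / (n.choose w : ℝ)) := by
  refine (expected_statDist_unif_sphere_random_code_general n k (sum_funif hw)).trans ?_
  rw [sum_funif_sq hw, ← div_eq_mul_inv, pow_sub₀ _ two_ne_zero hkn, ← div_eq_mul_inv]
  exact mul_le_of_le_one_left (Real.sqrt_nonneg _) (by norm_num)
end

section
/- Let n ≥ 1 and s > 0. Define G_n(x) = x^{n+1}·V_n(1)·2π·exp(−πx²) for x ≥ 0. Then for every x ∈ ℝⁿ, D_s(x) = (1/s)·∫₀^∞ G_n(w/s)·(1_{B_w}(x)/V_n(w)) dw; moreover (1/s)·∫₀^∞ G_n(w/s) dw = 1. In other words, the Gaussian density of parameter s in dimension n is the convex combination, with weights (1/s)·G_n(w/s) dw, of the uniform densities on Euclidean balls of radius w. -/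
open MeasureTheory

/-- `V_n(w) = π^{n/2} wⁿ / Γ(n/2+1)`, the volume of the Euclidean `n`-ball of radius `w`. -/
noncomputable def Vball (n : ℕ) (w : ℝ) : ℝ :=
  Real.pi ^ ((n : ℝ) / 2) * w ^ n / Real.Gamma ((n : ℝ) / 2 + 1)

/-- `G_n(x) = x^{n+1} V_n(1) 2π exp(−πx²)`. -/
noncomputable def Gfun (n : ℕ) (x : ℝ) : ℝ :=
  x ^ (n + 1) * Vball n 1 * (2 * Real.pi) * Real.exp (-Real.pi * x ^ 2)

/-- The Gaussian density of parameter `s` on `ℝⁿ`: `D_s(x) = s^{−n} exp(−π|x|₂²/s²)`. -/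
noncomputable def gaussD (n : ℕ) (s : ℝ) (x : EuclideanSpace ℝ (Fin n)) : ℝ :=
  (s ^ n)⁻¹ * Real.exp (-Real.pi * ‖x‖ ^ 2 / s ^ 2)

/-!
The Gaussian profile is the integral of minus its derivative,
`exp (-π r²) = ∫ w in (r, ∞), 2 π w exp (-π w²)`. Up to a null set the range `w > r` selects the
balls `B_w` that contain a point of norm `r`, and `2 π w exp (-π w²) = G_n(w) / V_n(w)`: this is
the decomposition for `s = 1`, and a dilation gives every `s`. The total weight is `2 π V_n(1)`
times the moment of order `n + 1` of `exp (-π w²)` on `(0, ∞)`, a value of the Gamma function.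
-/

open Set Filter Topology

lemma Vball_mul (n : ℕ) (a w : ℝ) : Vball n (a * w) = a ^ n * Vball n w := by
  simp only [Vball, mul_pow]
  ring

lemma Vball_pos (n : ℕ) {w : ℝ} (hw : 0 < w) : 0 < Vball n w := by
  have : 0 < Real.Gamma ((n : ℝ) / 2 + 1) := Real.Gamma_pos_of_pos (by positivity)
  unfold Vball
  positivity

lemma Gfun_eq_Vball_mul (n : ℕ) (w : ℝ) :
    Gfun n w = Vball n w * (2 * Real.pi * w * Real.exp (-Real.pi * w ^ 2)) := by
  have hV : Vball n w = w ^ n * Vball n 1 := by simpa using Vball_mul n w 1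
  rw [Gfun, hV]
  ring

lemma gaussD_eq_mul_exp_norm_div (n : ℕ) (s : ℝ) (x : EuclideanSpace ℝ (Fin n)) :
    gaussD n s x = (s ^ n)⁻¹ * Real.exp (-Real.pi * (‖x‖ / s) ^ 2) := by
  rw [gaussD, div_pow, mul_div_assoc]

lemma integral_Ioi_mul_exp_neg_mul_sq {b : ℝ} (hb : 0 < b) (r : ℝ) :
    ∫ w in Ioi r, 2 * b * w * Real.exp (-b * w ^ 2) = Real.exp (-b * r ^ 2) := by
  have hderiv (w : ℝ) : HasDerivAt (fun w ↦ -Real.exp (-b * w ^ 2))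
      (2 * b * w * Real.exp (-b * w ^ 2)) w := by
    refine ((hasDerivAt_pow 2 w).const_mul (-b)).exp.fun_neg.congr_deriv ?_
    push_cast
    ring
  have hint : Integrable fun w : ℝ ↦ 2 * b * w * Real.exp (-b * w ^ 2) := by
    simpa only [mul_assoc] using (integrable_mul_exp_neg_mul_sq hb).const_mul (2 * b)
  have hlim : Tendsto (fun w : ℝ ↦ -Real.exp (-b * w ^ 2)) atTop (𝓝 0) := by
    rw [← neg_zero]
    exact (Real.tendsto_exp_atBot.comp ((tendsto_pow_atTop two_ne_zero).const_mul_atTop_of_neg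
      (neg_lt_zero.mpr hb))).neg
  rw [integral_Ioi_of_hasDerivAt_of_tendsto' (fun w _ ↦ hderiv w) hint.integrableOn hlim]
  ring

lemma setIntegral_Ioi_indicator_Ici {α E : Type*} [LinearOrder α] [TopologicalSpace α]
    [OrderClosedTopology α] [MeasurableSpace α] [OpensMeasurableSpace α] [NormedAddCommGroup E]
    [NormedSpace ℝ E] {μ : Measure α} [NullSingletonClass μ] {a r : α} (har : a ≤ r) (f : α → E) :
    ∫ w in Ioi a, (Ici r).indicator f w ∂μ = ∫ w in Ioi r, f w ∂μ := by
  calc ∫ w in Ioi a, (Ici r).indicator f w ∂μ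
      = ∫ w in Ioi a ∩ Ici r, f w ∂μ := setIntegral_indicator measurableSet_Ici
    _ = ∫ w in Ioi a ∩ Ioi r, f w ∂μ := setIntegral_congr_set (ae_eq_rfl.inter Ioi_ae_eq_Ici.symm)
    _ = ∫ w in Ioi r, f w ∂μ := by rw [Ioi_inter_Ioi, max_eq_right har]

lemma integral_Gfun_mul_ite_le_div_Vball (n : ℕ) {r : ℝ} (hr : 0 ≤ r) :
    ∫ w in Ioi (0 : ℝ), Gfun n w * ((if r ≤ w then 1 else 0) / Vball n w) =
      Real.exp (-Real.pi * r ^ 2) := by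
  have hcancel : EqOn (fun w ↦ Gfun n w * ((if r ≤ w then 1 else 0) / Vball n w))
      ((Ici r).indicator fun w ↦ 2 * Real.pi * w * Real.exp (-Real.pi * w ^ 2)) (Ioi 0) :=
    fun w hw ↦ by
      have := (Vball_pos n hw).ne'
      simp only [Gfun_eq_Vball_mul, indicator_apply, mem_Ici]
      split_ifs
      · field_simp
      · simp
  rw [setIntegral_congr_fun measurableSet_Ioi hcancel, setIntegral_Ioi_indicator_Ici hr,
    integral_Ioi_mul_exp_neg_mul_sq Real.pi_pos]

lemma integral_pow_mul_exp_neg_mul_sq_Ioi (n : ℕ) {b : ℝ} (hb : 0 < b) :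
    ∫ w in Ioi (0 : ℝ), w ^ n * Real.exp (-b * w ^ 2) =
      b ^ (-((n : ℝ) + 1) / 2) * (1 / 2) * Real.Gamma (((n : ℝ) + 1) / 2) := by
  have hn : (-1 : ℝ) < n := by linarith [n.cast_nonneg (α := ℝ)]
  simpa only [Real.rpow_natCast, Real.rpow_two] using
    integral_rpow_mul_exp_neg_mul_rpow two_pos hn hb

lemma integral_pow_succ_mul_exp_neg_pi_mul_sq_Ioi (n : ℕ) :
    ∫ w in Ioi (0 : ℝ), w ^ (n + 1) * Real.exp (-Real.pi * w ^ 2) =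
      (2 * Real.pi * Vball n 1)⁻¹ := by
  have hexp : -(((n + 1 : ℕ) : ℝ) + 1) / 2 = -((n : ℝ) / 2) - 1 := by push_cast; ring
  have harg : (((n + 1 : ℕ) : ℝ) + 1) / 2 = (n : ℝ) / 2 + 1 := by push_cast; ring
  rw [integral_pow_mul_exp_neg_mul_sq_Ioi (n + 1) Real.pi_pos, hexp, harg,
    Real.rpow_sub_one Real.pi_ne_zero, Real.rpow_neg Real.pi_pos.le, Vball]
  simp only [one_pow, mul_one, div_eq_mul_inv, mul_inv, inv_inv]
  ring

lemma integral_Gfun (n : ℕ) : ∫ w in Ioi (0 : ℝ), Gfun n w = 1 := by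
  have hne : 2 * Real.pi * Vball n 1 ≠ 0 :=
    mul_ne_zero Real.two_pi_pos.ne' (Vball_pos n one_pos).ne'
  calc ∫ w in Ioi (0 : ℝ), Gfun n w
      = ∫ w in Ioi (0 : ℝ), 2 * Real.pi * Vball n 1 *
          (w ^ (n + 1) * Real.exp (-Real.pi * w ^ 2)) := by
        congr with w
        rw [Gfun]
        ring
    _ = 2 * Real.pi * Vball n 1 * (2 * Real.pi * Vball n 1)⁻¹ := by
        rw [integral_const_mul, integral_pow_succ_mul_exp_neg_pi_mul_sq_Ioi]
    _ = 1 := mul_inv_cancel₀ hne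

lemma Gfun_mul_ite_le_div_Vball_mul (n : ℕ) {s : ℝ} (hs : 0 < s) (r u : ℝ) :
    Gfun n (s * u / s) * ((if r ≤ s * u then 1 else 0) / Vball n (s * u)) =
      (s ^ n)⁻¹ * (Gfun n u * ((if r / s ≤ u then 1 else 0) / Vball n u)) := by
  rw [mul_div_cancel_left₀ u hs.ne', Vball_mul]
  simp only [div_le_iff₀' hs]
  ring

/-- The Gaussian density of parameter `s` in dimension `n` is the convex combination,
with weights `(1/s) G_n(w/s) dw`, of the uniform densities on Euclidean balls of radius
`w`:  `D_s(x) = (1/s) ∫₀^∞ G_n(w/s) (1_{B_w}(x)/V_n(w)) dw` and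
`(1/s) ∫₀^∞ G_n(w/s) dw = 1`. -/
theorem gaussian_convex_combination_of_balls (n : ℕ) (hn : 1 ≤ n) (s : ℝ) (hs : 0 < s) :
    (∀ x : EuclideanSpace ℝ (Fin n),
      gaussD n s x =
        (1 / s) * ∫ w in Set.Ioi (0 : ℝ),
          Gfun n (w / s) * ((if ‖x‖ ≤ w then (1 : ℝ) else 0) / Vball n w)) ∧
    (1 / s) * (∫ w in Set.Ioi (0 : ℝ), Gfun n (w / s)) = 1 := by
  have hdilate (g : ℝ → ℝ) : (1 / s) * ∫ w in Ioi 0, g w = ∫ u in Ioi 0, g (s * u) := by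
    simpa using (integral_comp_mul_left_Ioi g 0 hs).symm
  refine ⟨fun x ↦ ?_, ?_⟩
  · have hr : 0 ≤ ‖x‖ / s := by positivity
    rw [hdilate]
    simp only [Gfun_mul_ite_le_div_Vball_mul n hs]
    rw [integral_const_mul, integral_Gfun_mul_ite_le_div_Vball n hr, gaussD_eq_mul_exp_norm_div]
  · rw [hdilate]
    simp only [mul_div_cancel_left₀ _ hs.ne', integral_Gfun]
end

section
/- Let n ≥ 1, s > 0 and η ∈ (0,1), and set w̄ = √(1−η)·s·√(n/(2π)). With G_n(x) = x^{n+1}·V_n(1)·2π·exp(−πx²), one has (1/s)·∫₀^{w̄} G_n(w/s) dw ≤ exp(−η²·n/8). -/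
open MeasureTheory

/-!
Under the substitution `y = πx²` the density `Gfun n` on `(0, ∞)` becomes the density of the Gamma
distribution with shape `a = n / 2 + 1` and rate `1`, and the integral up to `w̄` becomes the mass
of `(0, (1 - η) * n / 2]`, hence at most the mass of `(0, (1 - η) * a]`. Comparing `exp (-y)` with
`exp (-(r * y))` for `r = 1 / (1 - η)`, the optimal Chernoff parameter, bounds the latter mass by
`((1 - η) * exp η) ^ a ≤ exp (-η ^ 2 * a / 2)`.
-/

/-- The lower incomplete Gamma function `γ(a, x) = ∫₀ˣ exp(-y) y^(a-1) dy`. Integrating over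
`Set.Ioc 0 x` makes it vanish for `x ≤ 0`. -/
noncomputable def lowerIncompleteGamma (a x : ℝ) : ℝ :=
  ∫ y in Set.Ioc 0 x, Real.exp (-y) * y ^ (a - 1)

theorem one_sub_le_exp_neg_add_sq_div_two {x : ℝ} (hx : 0 ≤ x) :
    1 - x ≤ Real.exp (-(x + x ^ 2 / 2)) := by
  rcases lt_or_ge x 1 with hx1 | hx1
  · have htaylor : x + x ^ 2 / 2 ≤ -Real.log (1 - x) := by
      simpa [Finset.sum_range_succ, one_add_one_eq_two] using
        sum_le_hasSum (Finset.range 2) (fun i _ => by positivity)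
          (Real.hasSum_pow_div_log_of_abs_lt_one (abs_lt.2 ⟨by linarith, hx1⟩))
    exact (Real.log_le_iff_le_exp (sub_pos.2 hx1)).1 (le_neg_of_le_neg htaylor)
  · exact (sub_nonpos.2 hx1).trans (Real.exp_pos _).le

section lowerIncompleteGamma

variable {a : ℝ}

theorem integrableOn_rpow_mul_exp_neg_mul (ha : 0 < a) {r : ℝ} (hr : 0 < r) :
    IntegrableOn (fun y : ℝ => y ^ (a - 1) * Real.exp (-(r * y))) (Set.Ioi 0) := by
  simpa only [Real.rpow_one, neg_mul] using
    integrableOn_rpow_mul_exp_neg_mul_rpow (by linarith : -1 < a - 1) one_pos hr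

theorem lowerIncompleteGamma_mono (ha : 0 < a) : Monotone (lowerIncompleteGamma a) := by
  intro x x' hxx'
  refine setIntegral_mono_set ((Real.GammaIntegral_convergent ha).mono_set Set.Ioc_subset_Ioi_self)
    ?_ (Set.Ioc_subset_Ioc_right hxx').eventuallyLE
  filter_upwards [ae_restrict_mem measurableSet_Ioc] with y hy
  exact mul_nonneg (Real.exp_pos _).le (Real.rpow_nonneg hy.1.le _)

theorem lowerIncompleteGamma_le_exp_mul (ha : 0 < a) {r : ℝ} (hr : 1 ≤ r) (x : ℝ) :
    lowerIncompleteGamma a x ≤ Real.exp ((r - 1) * x) * ((1 / r) ^ a * Real.Gamma a) := by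
  have hr0 : 0 < r := one_pos.trans_le hr
  have hint : IntegrableOn
      (fun y : ℝ => Real.exp ((r - 1) * x) * (y ^ (a - 1) * Real.exp (-(r * y)))) (Set.Ioi 0) :=
    (integrableOn_rpow_mul_exp_neg_mul ha hr0).const_mul _
  calc
    lowerIncompleteGamma a x
      ≤ ∫ y in Set.Ioc 0 x, Real.exp ((r - 1) * x) * (y ^ (a - 1) * Real.exp (-(r * y))) := by
        refine setIntegral_mono_on
          ((Real.GammaIntegral_convergent ha).mono_set Set.Ioc_subset_Ioi_self)
          (hint.mono_set Set.Ioc_subset_Ioi_self) measurableSet_Ioc fun y ⟨hy0, hyx⟩ => ?_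
        have htilt : Real.exp (-y) ≤ Real.exp ((r - 1) * x) * Real.exp (-(r * y)) := by
          rw [← Real.exp_add, Real.exp_le_exp]
          linarith [mul_le_mul_of_nonneg_left hyx (sub_nonneg.2 hr)]
        rw [mul_left_comm, mul_comm]
        gcongr
    _ ≤ ∫ y in Set.Ioi 0, Real.exp ((r - 1) * x) * (y ^ (a - 1) * Real.exp (-(r * y))) := by
        refine setIntegral_mono_set hint ?_ Set.Ioc_subset_Ioi_self.eventuallyLE
        filter_upwards [ae_restrict_mem measurableSet_Ioi] with y hy
        have : 0 < y := hy
        simp only [Pi.zero_apply]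
        positivity
    _ = Real.exp ((r - 1) * x) * ((1 / r) ^ a * Real.Gamma a) := by
        rw [integral_const_mul, Real.integral_rpow_mul_exp_neg_mul_Ioi ha hr0]

theorem lowerIncompleteGamma_one_sub_mul_le (ha : 0 < a) {δ : ℝ} (hδ : 0 ≤ δ) :
    lowerIncompleteGamma a ((1 - δ) * a) ≤ Real.exp (-δ ^ 2 * a / 2) * Real.Gamma a := by
  have : 0 < Real.Gamma a := Real.Gamma_pos_of_pos ha
  rcases lt_or_ge δ 1 with hδ1 | hδ1
  · have hδ' : 0 < 1 - δ := sub_pos.2 hδ1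
    calc
      lowerIncompleteGamma a ((1 - δ) * a)
        ≤ Real.exp ((1 / (1 - δ) - 1) * ((1 - δ) * a)) *
            ((1 / (1 / (1 - δ))) ^ a * Real.Gamma a) :=
          lowerIncompleteGamma_le_exp_mul ha ((one_le_div hδ').2 (by linarith)) _
      _ = Real.exp (δ * a) * ((1 - δ) ^ a * Real.Gamma a) := by
          rw [one_div_one_div]
          congr 2
          field_simp
          ring
      _ ≤ Real.exp (δ * a) * (Real.exp (-(δ + δ ^ 2 / 2)) ^ a * Real.Gamma a) := by
          gcongr
          exact one_sub_le_exp_neg_add_sq_div_two hδ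
      _ = Real.exp (-δ ^ 2 * a / 2) * Real.Gamma a := by
          rw [← Real.exp_mul, ← mul_assoc, ← Real.exp_add]
          ring_nf
  · have hempty : Set.Ioc 0 ((1 - δ) * a) = ∅ :=
      Set.Ioc_eq_empty_of_le (mul_nonpos_of_nonpos_of_nonneg (sub_nonpos.2 hδ1) ha.le)
    rw [lowerIncompleteGamma, hempty, setIntegral_empty]
    positivity

end lowerIncompleteGamma

theorem Gfun_eq_comp_mul_deriv (n : ℕ) {x : ℝ} (hx : 0 ≤ x) :
    Gfun n x = (Real.Gamma ((n : ℝ) / 2 + 1))⁻¹ *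
      (Real.exp (-(Real.pi * x ^ 2)) * (Real.pi * x ^ 2) ^ ((n : ℝ) / 2) *
        (Real.pi * (2 * x))) := by
  have hpow : (x ^ 2) ^ ((n : ℝ) / 2) = x ^ n := by
    rw [← Real.rpow_natCast_mul hx, Nat.cast_ofNat, mul_div_cancel₀ _ two_ne_zero,
      Real.rpow_natCast]
  rw [Gfun, Vball, Real.mul_rpow Real.pi_pos.le (sq_nonneg x), hpow, neg_mul]
  ring

theorem integral_Gfun_s16 (n : ℕ) {c : ℝ} (hc : 0 ≤ c) :
    ∫ x in (0 : ℝ)..c, Gfun n x =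
      lowerIncompleteGamma ((n : ℝ) / 2 + 1) (Real.pi * c ^ 2) / Real.Gamma ((n : ℝ) / 2 + 1) := by
  have hsubst : ∫ x in (0 : ℝ)..c, Real.exp (-(Real.pi * x ^ 2)) *
        (Real.pi * x ^ 2) ^ ((n : ℝ) / 2) * (Real.pi * (2 * x)) =
      ∫ y in (Real.pi * 0 ^ 2)..(Real.pi * c ^ 2), Real.exp (-y) * y ^ ((n : ℝ) / 2) := by
    refine intervalIntegral.integral_comp_mul_deriv (f := fun x => Real.pi * x ^ 2)
      (g := fun y => Real.exp (-y) * y ^ ((n : ℝ) / 2)) (fun x _ => ?_) (by fun_prop) ?_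
    · simpa using (hasDerivAt_pow 2 x).const_mul Real.pi
    · exact (by fun_prop : Continuous fun y : ℝ => Real.exp (-y)).mul
        (Real.continuous_rpow_const (by positivity))
  rw [intervalIntegral.integral_congr fun x hx =>
      Gfun_eq_comp_mul_deriv n (Set.uIcc_of_le hc ▸ hx).1,
    intervalIntegral.integral_const_mul, hsubst, zero_pow two_ne_zero, mul_zero,
    intervalIntegral.integral_of_le (by positivity), lowerIncompleteGamma, add_sub_cancel_right,
    inv_mul_eq_div]

theorem integral_Gfun_le {n : ℕ} {c δ : ℝ} (hc : 0 ≤ c) (hδ : 0 ≤ δ)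
    (hcδ : Real.pi * c ^ 2 ≤ (1 - δ) * ((n : ℝ) / 2 + 1)) :
    ∫ x in (0 : ℝ)..c, Gfun n x ≤ Real.exp (-δ ^ 2 * (n + 2) / 4) := by
  have ha : 0 < (n : ℝ) / 2 + 1 := by positivity
  rw [integral_Gfun_s16 n hc, div_le_iff₀ (Real.Gamma_pos_of_pos ha)]
  calc
    lowerIncompleteGamma ((n : ℝ) / 2 + 1) (Real.pi * c ^ 2)
      ≤ lowerIncompleteGamma ((n : ℝ) / 2 + 1) ((1 - δ) * ((n : ℝ) / 2 + 1)) :=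
        lowerIncompleteGamma_mono ha hcδ
    _ ≤ Real.exp (-δ ^ 2 * ((n : ℝ) / 2 + 1) / 2) * Real.Gamma ((n : ℝ) / 2 + 1) :=
        lowerIncompleteGamma_one_sub_mul_le ha hδ
    _ = Real.exp (-δ ^ 2 * (n + 2) / 4) * Real.Gamma ((n : ℝ) / 2 + 1) := by
        ring_nf

theorem gaussian_ball_decomposition_tail_bound_general (n : ℕ) (s η : ℝ)
    (hs : s ≠ 0) (hη : η ∈ Set.Icc (0 : ℝ) 1) :
    (1 / s) * (∫ w in (0 : ℝ)..(Real.sqrt (1 - η) * s * Real.sqrt (n / (2 * Real.pi))),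
        Gfun n (w / s)) ≤
      Real.exp (-η ^ 2 * (n + 2) / 4) := by
  have hη' : 0 ≤ 1 - η := sub_nonneg.2 hη.2
  set c := Real.sqrt (1 - η) * Real.sqrt (n / (2 * Real.pi)) with hc
  have hscale : Real.sqrt (1 - η) * s * Real.sqrt (n / (2 * Real.pi)) / s = c := by
    rw [hc]
    field_simp
  have hcsq : Real.pi * c ^ 2 = (1 - η) * (n / 2) := by
    rw [hc, mul_pow, Real.sq_sqrt hη', Real.sq_sqrt (by positivity)]
    field_simp
  rw [intervalIntegral.integral_comp_div _ hs, hscale, zero_div, smul_eq_mul, ← mul_assoc,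
    one_div_mul_cancel hs, one_mul]
  refine integral_Gfun_le (by positivity) hη.1 ?_
  rw [hcsq]
  gcongr
  linarith

/-- Gaussian lower-tail bound for the ball decomposition: for `w̄ = √(1−η) s √(n/2π)`,
`(1/s) ∫₀^{w̄} G_n(w/s) dw ≤ exp(−η²n/8)`. -/
theorem gaussian_ball_decomposition_tail_bound (n : ℕ) (hn : 1 ≤ n) (s η : ℝ)
    (hs : 0 < s) (hη : η ∈ Set.Ioo (0 : ℝ) 1) :
    (1 / s) * (∫ w in (0 : ℝ)..(Real.sqrt (1 - η) * s * Real.sqrt (n / (2 * Real.pi))),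
        Gfun n (w / s)) ≤
      Real.exp (-η ^ 2 * n / 8) := by
  refine (gaussian_ball_decomposition_tail_bound_general n s η hs.ne' ⟨hη.1.le, hη.2.le⟩).trans
    (Real.exp_le_exp.2 ?_)
  nlinarith [mul_nonneg (sq_nonneg η) n.cast_nonneg]
end

section
/- Let n ≥ 1 and let Λ ⊂ ℝⁿ be a full-rank lattice with fundamental domain F. Suppose there exist w₀ > 0 and K ≥ 0 such that for all w > w₀, Δ(u, f_unif,w^Λ) ≤ K·(w₀/w)^{n/2}. Set s₀ = w₀·√(2π/n). Then for every s > s₀, setting η = 1 − s₀/s ∈ (0,1), one has Δ(u, D_s^Λ) ≤ exp(−η²·n/8) + K·(s₀/s)^{n/4}. -/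
open MeasureTheory
open scoped BigOperators

/-- The periodization `g^Λ(x) = Σ_{y ∈ Λ} g(x+y)` of `g` over the lattice `Λ`. -/
noncomputable def perioL {n : ℕ} (Λ : Submodule ℤ (EuclideanSpace ℝ (Fin n)))
    (g : EuclideanSpace ℝ (Fin n) → ℝ) (x : EuclideanSpace ℝ (Fin n)) : ℝ :=
  ∑' y : Λ, g (x + y)

/-- The statistical distance `Δ(u, g^Λ) = (1/2) ∫_F |1/|Λ| − g^Λ(x)| dx`, where the
covolume `|Λ|` is the volume of the fundamental domain `F`. -/
noncomputable def latSD {n : ℕ} (Λ : Submodule ℤ (EuclideanSpace ℝ (Fin n)))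
    (F : Set (EuclideanSpace ℝ (Fin n))) (g : EuclideanSpace ℝ (Fin n) → ℝ) : ℝ :=
  (1 / 2) * ∫ x in F, |((volume F).toReal)⁻¹ - perioL Λ g x|

/-- The uniform density `1_{B_w}/V_n(w)` on the Euclidean ball of radius `w`. -/
noncomputable def funifL (n : ℕ) (w : ℝ) (x : EuclideanSpace ℝ (Fin n)) : ℝ :=
  if ‖x‖ ≤ w then (Vball n w)⁻¹ else 0

/-! The Gaussian is a mixture of uniform densities on balls: if `t` is Gamma-distributed with shape
`n / 2 + 1` and rate `1`, then the uniform density on the ball of radius `s √(t / π)` averages to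
`D_s`. Distance to the uniform density is convex under mixtures, and it is always at most `1`, so
with `r = s₀ / s` we have `Δ(u, D_s^Λ) ≤ P(radius < w₀ / √r) + sup_{w ≥ w₀ / √r} Δ(u, f_unif,w^Λ)`.
The supremum is at most `K (√r)^(n/2) = K r^(n/4)`, and the radius falls below `w₀ / √r` exactly
when `t < (n / 2) r`, a lower-tail event of probability at most `exp (-(1 - r)² n / 4)` by Chernoff.
-/

open ProbabilityTheory
open scoped ENNReal

section FundamentalDomain

variable {G α T : Type*} [AddGroup G] [AddAction G α]

/-- The `ℝ≥0∞`-valued periodization `x ↦ Σ_γ g(γ + x)` of `g` under an additive action of `G`.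
With values in `ℝ≥0∞` the sum always makes sense, so Tonelli's theorem applies freely. -/
noncomputable def periodization (G : Type*) [AddGroup G] [AddAction G α] (g : α → ℝ≥0∞) (x : α) :
    ℝ≥0∞ :=
  ∑' γ : G, g (γ +ᵥ x)

lemma periodization_lintegral [Countable G] [MeasurableSpace T] {ν : Measure T} {f : T → α → ℝ≥0∞}
    (hf : ∀ x, Measurable fun t => f t x) (x : α) :
    periodization G (fun x => ∫⁻ t, f t x ∂ν) x = ∫⁻ t, periodization G (f t) x ∂ν :=
  (lintegral_tsum fun _ => (hf _).aemeasurable).symm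

variable [MeasurableSpace α] [MeasurableSpace T]

/-- The `L¹` distance over `F` between the uniform density `(μ F)⁻¹` and the periodization of `g`,
i.e. twice the statistical distance. Subtraction in `ℝ≥0∞` is truncated, so `|a - b|` is encoded
as `(a - b) + (b - a)`. -/
noncomputable def uniformL1Dist (G : Type*) [AddGroup G] [AddAction G α] (F : Set α)
    (μ : Measure α) (g : α → ℝ≥0∞) : ℝ≥0∞ :=
  ∫⁻ x in F, ((μ F)⁻¹ - periodization G g x) + (periodization G g x - (μ F)⁻¹) ∂μ

variable [Countable G] [MeasurableConstVAdd G α] {μ : Measure α} {ν : Measure T} {F : Set α}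

lemma measurable_periodization {g : α → ℝ≥0∞} (hg : Measurable g) :
    Measurable (periodization G g) :=
  Measurable.tsum fun γ => hg.comp (measurable_const_vadd γ)

lemma measurable_uncurry_periodization {f : T → α → ℝ≥0∞} (hf : Measurable (Function.uncurry f)) :
    Measurable (Function.uncurry fun t => periodization G (f t)) :=
  Measurable.tsum fun γ =>
    hf.comp (measurable_fst.prodMk ((measurable_const_vadd γ).comp measurable_snd))

lemma setLIntegral_periodization [VAddInvariantMeasure G α μ] (hF : IsAddFundamentalDomain G F μ)
    {g : α → ℝ≥0∞} (hg : Measurable g) :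
    ∫⁻ x in F, periodization G g x ∂μ = ∫⁻ x, g x ∂μ := by
  rw [hF.lintegral_eq_tsum'']
  exact lintegral_tsum fun γ => (hg.comp (measurable_const_vadd γ)).aemeasurable

lemma uniformL1Dist_le_one_add_lintegral [VAddInvariantMeasure G α μ]
    (hF : IsAddFundamentalDomain G F μ) {g : α → ℝ≥0∞} (hg : Measurable g) :
    uniformL1Dist G F μ g ≤ 1 + ∫⁻ x, g x ∂μ :=
  calc uniformL1Dist G F μ g
      ≤ ∫⁻ x in F, (μ F)⁻¹ + periodization G g x ∂μ :=
        lintegral_mono fun _ => add_le_add tsub_le_self tsub_le_self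
    _ = (μ F)⁻¹ * μ F + ∫⁻ x, g x ∂μ := by
        rw [lintegral_add_left measurable_const, setLIntegral_const,
          setLIntegral_periodization hF hg]
    _ ≤ 1 + ∫⁻ x, g x ∂μ := by
        gcongr
        exact ENNReal.inv_mul_le_one _

lemma uniformL1Dist_lintegral_le [SFinite μ] [IsProbabilityMeasure ν] {f : T → α → ℝ≥0∞}
    (hf : Measurable (Function.uncurry f)) :
    uniformL1Dist G F μ (fun x => ∫⁻ t, f t x ∂ν) ≤ ∫⁻ t, uniformL1Dist G F μ (f t) ∂ν := by
  have hP := measurable_uncurry_periodization (G := G) hf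
  have hPx (x : α) : Measurable fun t => periodization G (f t) x := hP.comp measurable_prodMk_right
  have hdist : Measurable (Function.uncurry fun t x =>
      ((μ F)⁻¹ - periodization G (f t) x) + (periodization G (f t) x - (μ F)⁻¹)) :=
    (measurable_const.sub hP).add (hP.sub measurable_const)
  have hc : (μ F)⁻¹ = ∫⁻ _, (μ F)⁻¹ ∂ν := by rw [lintegral_const, measure_univ, mul_one]
  have hfx (x : α) : Measurable fun t => f t x := hf.comp measurable_prodMk_right
  simp only [uniformL1Dist, periodization_lintegral hfx]
  rw [lintegral_lintegral_swap hdist.aemeasurable]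
  refine lintegral_mono fun x => ?_
  rw [lintegral_add_left ((hPx x).const_sub _)]
  refine add_le_add ?_ ?_
  · conv_lhs => rw [hc]
    exact lintegral_sub_le _ _ (hPx x)
  · conv_lhs => rw [hc]
    exact lintegral_sub_le _ _ measurable_const

lemma uniformL1Dist_lintegral_le_add [VAddInvariantMeasure G α μ] [SFinite μ]
    [IsProbabilityMeasure ν] (hF : IsAddFundamentalDomain G F μ) {f : T → α → ℝ≥0∞}
    (hf : Measurable (Function.uncurry f)) (hf_le : ∀ t, ∫⁻ x, f t x ∂μ ≤ 1)
    {A : Set T} (hA : MeasurableSet A) {ε : ℝ≥0∞}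
    (hε : ∀ t ∈ Aᶜ, uniformL1Dist G F μ (f t) ≤ ε) :
    uniformL1Dist G F μ (fun x => ∫⁻ t, f t x ∂ν) ≤ 2 * ν A + ε := by
  have htwo (t : T) : uniformL1Dist G F μ (f t) ≤ 2 := by
    rw [← one_add_one_eq_two]
    exact (uniformL1Dist_le_one_add_lintegral hF (hf.comp measurable_prodMk_left)).trans
      (by gcongr; exact hf_le t)
  calc uniformL1Dist G F μ (fun x => ∫⁻ t, f t x ∂ν)
      ≤ ∫⁻ t, uniformL1Dist G F μ (f t) ∂ν := uniformL1Dist_lintegral_le hf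
    _ = (∫⁻ t in A, uniformL1Dist G F μ (f t) ∂ν) + ∫⁻ t in Aᶜ, uniformL1Dist G F μ (f t) ∂ν :=
        (lintegral_add_compl _ hA).symm
    _ ≤ (∫⁻ _ in A, 2 ∂ν) + ∫⁻ _ in Aᶜ, ε ∂ν :=
        add_le_add (lintegral_mono htwo) (setLIntegral_mono' hA.compl hε)
    _ ≤ 2 * ν A + ε := by
        rw [setLIntegral_const, setLIntegral_const]
        gcongr
        exact mul_le_of_le_one_right' prob_le_one

end FundamentalDomain

section StatisticalDistance

instance vaddInvariantMeasure_submodule {R E : Type*} [Semiring R] [AddCommMonoid E] [Module R E]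
    [MeasurableSpace E] (μ : Measure E) [μ.IsAddLeftInvariant] (p : Submodule R E) :
    VAddInvariantMeasure p E μ :=
  inferInstanceAs (VAddInvariantMeasure p.toAddSubmonoid E μ)

variable {n : ℕ} {Λ : Submodule ℤ (EuclideanSpace ℝ (Fin n))} {F : Set (EuclideanSpace ℝ (Fin n))}

lemma perioL_eq_toReal_periodization {g : EuclideanSpace ℝ (Fin n) → ℝ} (hg : ∀ x, 0 ≤ g x)
    (x : EuclideanSpace ℝ (Fin n)) :
    perioL Λ g x = (periodization Λ (fun x => ENNReal.ofReal (g x)) x).toReal := by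
  rw [periodization, ENNReal.tsum_toReal_eq fun _ => ENNReal.ofReal_ne_top, perioL]
  refine tsum_congr fun y => ?_
  rw [ENNReal.toReal_ofReal (hg _), add_comm, Submodule.vadd_def, vadd_eq_add]

lemma abs_toReal_sub_toReal {a b : ℝ≥0∞} (ha : a ≠ ∞) (hb : b ≠ ∞) :
    |a.toReal - b.toReal| = ((a - b) + (b - a)).toReal := by
  rcases le_total a b with h | h
  · rw [tsub_eq_zero_of_le h, zero_add, ENNReal.toReal_sub_of_le h hb, abs_sub_comm,
      abs_of_nonneg (sub_nonneg.2 (ENNReal.toReal_mono hb h))]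
  · rw [tsub_eq_zero_of_le h, add_zero, ENNReal.toReal_sub_of_le h ha,
      abs_of_nonneg (sub_nonneg.2 (ENNReal.toReal_mono ha h))]

variable [Countable Λ]

lemma latSD_eq_half_toReal_uniformL1Dist (hF : IsAddFundamentalDomain Λ F volume)
    {g : EuclideanSpace ℝ (Fin n) → ℝ} (hg : Measurable g) (hg_nonneg : ∀ x, 0 ≤ g x)
    (hg_int : ∫⁻ x, ENNReal.ofReal (g x) ≠ ∞) :
    latSD Λ F g =
      1 / 2 * (uniformL1Dist Λ F volume fun x => ENNReal.ofReal (g x)).toReal := by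
  have hP := measurable_periodization (G := Λ) hg.ennreal_ofReal
  have hdist : Measurable fun x =>
      ((volume F)⁻¹ - periodization Λ (fun x => ENNReal.ofReal (g x)) x) +
        (periodization Λ (fun x => ENNReal.ofReal (g x)) x - (volume F)⁻¹) :=
    (hP.const_sub _).add (hP.sub_const _)
  have hP_lt : ∀ᵐ x ∂volume.restrict F,
      periodization Λ (fun x => ENNReal.ofReal (g x)) x < ∞ := by
    refine ae_lt_top hP ?_
    rwa [setLIntegral_periodization hF hg.ennreal_ofReal]
  have hc : (volume F)⁻¹ ≠ ∞ :=
    ENNReal.inv_ne_top.2 (hF.measure_ne_zero (NeZero.ne volume))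
  rw [latSD, uniformL1Dist, ← integral_toReal hdist.aemeasurable]
  · congr 1
    refine integral_congr_ae ?_
    filter_upwards [hP_lt] with x hx
    rw [perioL_eq_toReal_periodization hg_nonneg, ← ENNReal.toReal_inv,
      abs_toReal_sub_toReal hc hx.ne]
  · filter_upwards [hP_lt] with x hx
    exact ENNReal.add_lt_top.2
      ⟨tsub_le_self.trans_lt hc.lt_top, tsub_le_self.trans_lt hx⟩

lemma latSD_le_iff (hF : IsAddFundamentalDomain Λ F volume)
    {g : EuclideanSpace ℝ (Fin n) → ℝ} (hg : Measurable g) (hg_nonneg : ∀ x, 0 ≤ g x)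
    (hg_int : ∫⁻ x, ENNReal.ofReal (g x) ≠ ∞) {δ : ℝ} (hδ : 0 ≤ δ) :
    latSD Λ F g ≤ δ ↔
      uniformL1Dist Λ F volume (fun x => ENNReal.ofReal (g x)) ≤ ENNReal.ofReal (2 * δ) := by
  have hdist : uniformL1Dist Λ F volume (fun x => ENNReal.ofReal (g x)) ≠ ∞ :=
    ne_top_of_le_ne_top (ENNReal.add_ne_top.2 ⟨ENNReal.one_ne_top, hg_int⟩)
      (uniformL1Dist_le_one_add_lintegral hF hg.ennreal_ofReal)
  rw [latSD_eq_half_toReal_uniformL1Dist hF hg hg_nonneg hg_int,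
    ENNReal.le_ofReal_iff_toReal_le hdist (by positivity), one_div,
    inv_mul_le_iff₀ (by norm_num)]

end StatisticalDistance

section GammaDistribution

lemma measurable_gammaPDF (a r : ℝ) : Measurable (gammaPDF a r) :=
  (measurable_gammaPDFReal a r).ennreal_ofReal

lemma gammaPDF_mul_exp_neg {a r θ : ℝ} (hr : 0 ≤ r) (hrθ : 0 < r + θ) (t : ℝ) :
    gammaPDF a r t * ENNReal.ofReal (Real.exp (-(θ * t))) =
      ENNReal.ofReal ((r / (r + θ)) ^ a) * gammaPDF a (r + θ) t := by
  rcases lt_or_ge t 0 with ht | ht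
  · rw [gammaPDF_of_neg ht, gammaPDF_of_neg ht, zero_mul, mul_zero]
  · have hpow : (r + θ) ^ a ≠ 0 := (Real.rpow_pos_of_pos hrθ a).ne'
    have hexp : Real.exp (-((r + θ) * t)) = Real.exp (-(r * t)) * Real.exp (-(θ * t)) := by
      rw [← Real.exp_add]
      ring_nf
    rw [gammaPDF_of_nonneg ht, gammaPDF_of_nonneg ht, ← ENNReal.ofReal_mul' (Real.exp_nonneg _),
      ← ENNReal.ofReal_mul (by positivity), Real.div_rpow hr hrθ.le, hexp]
    congr 1
    field_simp

lemma lintegral_exp_neg_mul_gammaMeasure {a r θ : ℝ} (ha : 0 < a) (hr : 0 ≤ r) (hrθ : 0 < r + θ) :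
    ∫⁻ t, ENNReal.ofReal (Real.exp (-(θ * t))) ∂gammaMeasure a r =
      ENNReal.ofReal ((r / (r + θ)) ^ a) := by
  rw [gammaMeasure, lintegral_withDensity_eq_lintegral_mul _ (measurable_gammaPDF a r)
    (by fun_prop)]
  simp only [Pi.mul_apply, gammaPDF_mul_exp_neg hr hrθ]
  rw [lintegral_const_mul _ (measurable_gammaPDF a _), lintegral_gammaPDF_eq_one ha hrθ, mul_one]

lemma gammaMeasure_Iic_le_exp_mul_rpow {a r θ : ℝ} (ha : 0 < a) (hr : 0 < r) (hθ : 0 ≤ θ) (x : ℝ) :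
    gammaMeasure a r (Set.Iic x) ≤
      ENNReal.ofReal (Real.exp (θ * x) * (r / (r + θ)) ^ a) :=
  calc gammaMeasure a r (Set.Iic x)
      = ∫⁻ t, (Set.Iic x).indicator 1 t ∂gammaMeasure a r :=
        (lintegral_indicator_one measurableSet_Iic).symm
    _ ≤ ∫⁻ t, ENNReal.ofReal (Real.exp (θ * x)) * ENNReal.ofReal (Real.exp (-(θ * t)))
          ∂gammaMeasure a r := by
        refine lintegral_mono (Set.indicator_le fun t (ht : t ≤ x) => ?_)
        rw [Pi.one_apply, ← ENNReal.ofReal_mul (Real.exp_nonneg _), ← Real.exp_add,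
          ENNReal.one_le_ofReal, Real.one_le_exp_iff]
        linarith [mul_le_mul_of_nonneg_left ht hθ]
    _ = ENNReal.ofReal (Real.exp (θ * x) * (r / (r + θ)) ^ a) := by
        rw [lintegral_const_mul _ (by fun_prop),
          lintegral_exp_neg_mul_gammaMeasure ha hr.le (by positivity),
          ENNReal.ofReal_mul (Real.exp_nonneg _)]

lemma add_sq_half_le_neg_log_one_sub {u : ℝ} (hu : 0 ≤ u) (hu' : u < 1) :
    u + u ^ 2 / 2 ≤ -Real.log (1 - u) := by
  have hsum := Real.hasSum_pow_div_log_of_abs_lt_one (abs_lt.2 ⟨by linarith, hu'⟩)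
  have hle := sum_le_hasSum (Finset.range 2) (fun k _ => by positivity) hsum
  norm_num [Finset.sum_range_succ] at hle
  exact hle

lemma mul_exp_one_sub_le {r : ℝ} (hr : 0 < r) (hr' : r ≤ 1) :
    r * Real.exp (1 - r) ≤ Real.exp (-((1 - r) ^ 2 / 2)) := by
  have hlog := add_sq_half_le_neg_log_one_sub (sub_nonneg.2 hr') (sub_lt_self 1 hr)
  rw [sub_sub_cancel] at hlog
  nth_rw 1 [← Real.exp_log hr]
  rw [← Real.exp_add, Real.exp_le_exp]
  linarith

lemma gammaMeasure_Iic_mul_le {m r : ℝ} (hm : 0 ≤ m) (hr : 0 < r) (hr' : r ≤ 1) :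
    gammaMeasure (m + 1) 1 (Set.Iic (m * r)) ≤
      ENNReal.ofReal (Real.exp (-(m * (1 - r) ^ 2 / 2))) := by
  -- `θ = r⁻¹ - 1` is the optimal exponent in the Chernoff bound for shape `m`.
  refine (gammaMeasure_Iic_le_exp_mul_rpow (θ := r⁻¹ - 1) (by positivity) one_pos
    (sub_nonneg.2 (one_le_inv_iff₀.2 ⟨hr, hr'⟩)) _).trans (ENNReal.ofReal_le_ofReal ?_)
  calc Real.exp ((r⁻¹ - 1) * (m * r)) * (1 / (1 + (r⁻¹ - 1))) ^ (m + 1)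
      = Real.exp ((1 - r) * m) * r ^ (m + 1) := by
        rw [add_sub_cancel, one_div, inv_inv]
        congr 2
        field_simp
    _ ≤ Real.exp ((1 - r) * m) * r ^ m := by
        gcongr _ * ?_
        exact Real.rpow_le_rpow_of_exponent_ge hr hr' (by linarith)
    _ = (r * Real.exp (1 - r)) ^ m := by
        rw [Real.mul_rpow hr.le (Real.exp_nonneg _), ← Real.exp_mul, mul_comm]
    _ ≤ Real.exp (-((1 - r) ^ 2 / 2)) ^ m :=
        Real.rpow_le_rpow (by positivity) (mul_exp_one_sub_le hr hr') hm
    _ = Real.exp (-(m * (1 - r) ^ 2 / 2)) := by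
        rw [← Real.exp_mul]
        ring_nf

end GammaDistribution

section GaussianMixture

variable {n : ℕ}

lemma Vball_nonneg {w : ℝ} (hw : 0 ≤ w) : 0 ≤ Vball n w := by
  have := Real.Gamma_nonneg_of_nonneg (show (0 : ℝ) ≤ n / 2 + 1 by positivity)
  unfold Vball
  positivity

lemma funifL_nonneg (w : ℝ) (x : EuclideanSpace ℝ (Fin n)) : 0 ≤ funifL n w x := by
  unfold funifL
  split_ifs with hx
  · exact inv_nonneg.2 (Vball_nonneg ((norm_nonneg x).trans hx))
  · exact le_rfl

lemma gaussD_nonneg {s : ℝ} (hs : 0 ≤ s) (x : EuclideanSpace ℝ (Fin n)) : 0 ≤ gaussD n s x := by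
  unfold gaussD
  positivity

lemma measurable_uncurry_funifL : Measurable (Function.uncurry (funifL n)) := by
  refine Measurable.ite (measurableSet_le (by fun_prop) (by fun_prop)) ?_ measurable_const
  unfold Vball
  fun_prop

lemma measurable_uncurry_funifL_mul_sqrt (s : ℝ) :
    Measurable (Function.uncurry fun t => funifL n (s * √(t / Real.pi))) :=
  measurable_uncurry_funifL.comp
    (f := fun p : ℝ × EuclideanSpace ℝ (Fin n) => (s * √(p.1 / Real.pi), p.2)) (by fun_prop)

lemma measurable_gaussD (s : ℝ) : Measurable (gaussD n s) := by
  unfold gaussD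
  fun_prop

lemma integrable_gaussD {s : ℝ} (hs : 0 < s) : Integrable (gaussD n s) := by
  have hb : 0 < Real.pi / s ^ 2 := by positivity
  have hexp : Integrable fun x : EuclideanSpace ℝ (Fin n) =>
      Real.exp (-(Real.pi / s ^ 2) * ‖x‖ ^ 2) := by
    refine .of_integral_ne_zero ?_
    rw [GaussianFourier.integral_rexp_neg_mul_sq_norm hb]
    positivity
  refine (hexp.const_mul (s ^ n)⁻¹).congr (ae_of_all _ fun x => ?_)
  simp only [gaussD]
  ring_nf

lemma volume_closedBall_eq_Vball (hn : n ≠ 0) {w : ℝ} (hw : 0 ≤ w) :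
    volume (Metric.closedBall (0 : EuclideanSpace ℝ (Fin n)) w) = ENNReal.ofReal (Vball n w) := by
  have : NeZero n := ⟨hn⟩
  have hsqrt : √Real.pi ^ n = Real.pi ^ ((n : ℝ) / 2) := by
    rw [Real.rpow_div_two_eq_sqrt _ Real.pi_pos.le, Real.rpow_natCast]
  rw [EuclideanSpace.volume_closedBall, Fintype.card_fin, ← ENNReal.ofReal_pow hw,
    ← ENNReal.ofReal_mul (by positivity), hsqrt, Vball]
  ring_nf

lemma lintegral_funifL_le_one (hn : n ≠ 0) (w : ℝ) :
    ∫⁻ x, ENNReal.ofReal (funifL n w x) ≤ 1 := by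
  have hind : (fun x => ENNReal.ofReal (funifL n w x)) =
      (Metric.closedBall (0 : EuclideanSpace ℝ (Fin n)) w).indicator
        fun _ => ENNReal.ofReal (Vball n w)⁻¹ := by
    ext x
    by_cases hx : ‖x‖ ≤ w <;> simp [funifL, hx]
  rw [hind, lintegral_indicator_const Metric.isClosed_closedBall.measurableSet]
  rcases lt_or_ge w 0 with hw | hw
  · simp [Metric.closedBall_eq_empty.2 hw]
  · rw [volume_closedBall_eq_Vball hn hw, ← ENNReal.ofReal_mul (inv_nonneg.2 (Vball_nonneg hw)),
      ENNReal.ofReal_le_one]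
    exact inv_mul_le_one

lemma Vball_mul_sqrt {s t : ℝ} (ht : 0 ≤ t) :
    Vball n (s * √(t / Real.pi)) = s ^ n * t ^ ((n : ℝ) / 2) / Real.Gamma ((n : ℝ) / 2 + 1) := by
  have hsqrt : √(t / Real.pi) ^ n = t ^ ((n : ℝ) / 2) / Real.pi ^ ((n : ℝ) / 2) := by
    rw [← Real.div_rpow ht Real.pi_pos.le, Real.rpow_div_two_eq_sqrt _ (by positivity),
      Real.rpow_natCast]
  have hpi : Real.pi ^ ((n : ℝ) / 2) ≠ 0 := (Real.rpow_pos_of_pos Real.pi_pos _).ne'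
  rw [Vball, mul_pow, hsqrt]
  field_simp

lemma le_mul_sqrt_div_pi_iff {s t a : ℝ} (hs : 0 < s) (ht : 0 ≤ t) (ha : 0 ≤ a) :
    a ≤ s * √(t / Real.pi) ↔ Real.pi * a ^ 2 / s ^ 2 ≤ t := by
  rw [← div_le_iff₀' hs, Real.le_sqrt (by positivity) (by positivity), div_pow,
    le_div_iff₀' Real.pi_pos, mul_div_assoc]

lemma gammaPDF_mul_funifL {s t : ℝ} (hs : 0 < s) (ht : t ≠ 0) (x : EuclideanSpace ℝ (Fin n)) :
    gammaPDF ((n : ℝ) / 2 + 1) 1 t * ENNReal.ofReal (funifL n (s * √(t / Real.pi)) x) =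
      (Set.Ici (Real.pi * ‖x‖ ^ 2 / s ^ 2)).indicator
        (fun t => ENNReal.ofReal ((s ^ n)⁻¹ * Real.exp (-t))) t := by
  rcases lt_or_gt_of_ne ht with hneg | hpos
  · have hlt : t < Real.pi * ‖x‖ ^ 2 / s ^ 2 := hneg.trans_le (by positivity)
    rw [gammaPDF_of_neg hneg, zero_mul, Set.indicator_of_notMem (Set.notMem_Ici.2 hlt)]
  have hmem := le_mul_sqrt_div_pi_iff hs hpos.le (norm_nonneg x)
  by_cases hx : Real.pi * ‖x‖ ^ 2 / s ^ 2 ≤ t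
  · rw [Set.indicator_of_mem (Set.mem_Ici.2 hx), funifL, if_pos (hmem.2 hx),
      Vball_mul_sqrt hpos.le, gammaPDF_of_nonneg hpos.le, ← ENNReal.ofReal_mul (by positivity),
      Real.one_rpow, add_sub_cancel_right, one_mul]
    congr 1
    field_simp
  · rw [Set.indicator_of_notMem (mt Set.mem_Ici.1 hx), funifL, if_neg (mt hmem.1 hx),
      ENNReal.ofReal_zero, mul_zero]

lemma ofReal_gaussD_eq_lintegral_funifL {s : ℝ} (hs : 0 < s) (x : EuclideanSpace ℝ (Fin n)) :
    ENNReal.ofReal (gaussD n s x) =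
      ∫⁻ t, ENNReal.ofReal (funifL n (s * √(t / Real.pi)) x) ∂gammaMeasure ((n : ℝ) / 2 + 1) 1 := by
  have hmeas : Measurable fun t : ℝ => ENNReal.ofReal (funifL n (s * √(t / Real.pi)) x) :=
    ((measurable_uncurry_funifL_mul_sqrt s).comp measurable_prodMk_right).ennreal_ofReal
  symm
  calc ∫⁻ t, ENNReal.ofReal (funifL n (s * √(t / Real.pi)) x) ∂gammaMeasure ((n : ℝ) / 2 + 1) 1
      = ∫⁻ t, gammaPDF ((n : ℝ) / 2 + 1) 1 t *
          ENNReal.ofReal (funifL n (s * √(t / Real.pi)) x) :=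
        lintegral_withDensity_eq_lintegral_mul _ (measurable_gammaPDF _ _) hmeas
    _ = ∫⁻ t in Set.Ioi (Real.pi * ‖x‖ ^ 2 / s ^ 2),
          ENNReal.ofReal ((s ^ n)⁻¹ * Real.exp (-t)) := by
        rw [lintegral_congr_ae ((Measure.ae_ne volume (0 : ℝ)).mono
          fun t ht => gammaPDF_mul_funifL hs ht x), lintegral_indicator measurableSet_Ici,
          setLIntegral_congr Ioi_ae_eq_Ici.symm]
    _ = ENNReal.ofReal (∫ t in Set.Ioi (Real.pi * ‖x‖ ^ 2 / s ^ 2),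
          (s ^ n)⁻¹ * Real.exp (-t)) :=
        (ofReal_integral_eq_lintegral_ofReal ((integrableOn_exp_neg_Ioi _).const_mul _)
          (ae_of_all _ fun t => by positivity)).symm
    _ = ENNReal.ofReal (gaussD n s x) := by
        rw [integral_const_mul, integral_exp_neg_Ioi, gaussD, neg_mul, neg_div]

end GaussianMixture

section Smoothing

lemma latSD_gaussD_le {n : ℕ} (hn : n ≠ 0) {Λ : Submodule ℤ (EuclideanSpace ℝ (Fin n))}
    [Countable Λ] {F : Set (EuclideanSpace ℝ (Fin n))} (hF : IsAddFundamentalDomain Λ F volume)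
    {s w₁ δ : ℝ} (hs : 0 < s) (hw₁ : 0 ≤ w₁) (hδ : 0 ≤ δ)
    (hball : ∀ w, w₁ ≤ w → latSD Λ F (funifL n w) ≤ δ) :
    latSD Λ F (gaussD n s) ≤
      (gammaMeasure ((n : ℝ) / 2 + 1) 1).real (Set.Iic (Real.pi * w₁ ^ 2 / s ^ 2)) + δ := by
  have : IsProbabilityMeasure (gammaMeasure ((n : ℝ) / 2 + 1) 1) :=
    isProbabilityMeasure_gammaMeasure (by positivity) one_pos
  have hmeas : Measurable (Function.uncurry fun t x =>
      ENNReal.ofReal (funifL n (s * √(t / Real.pi)) x)) :=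
    (measurable_uncurry_funifL_mul_sqrt s).ennreal_ofReal
  have hlarge : ∀ t ∈ (Set.Iic (Real.pi * w₁ ^ 2 / s ^ 2))ᶜ,
      uniformL1Dist Λ F volume (fun x => ENNReal.ofReal (funifL n (s * √(t / Real.pi)) x)) ≤
        ENNReal.ofReal (2 * δ) := by
    intro t ht
    have hlt : Real.pi * w₁ ^ 2 / s ^ 2 < t := not_le.1 ht
    have ht_nonneg : 0 ≤ t := (by positivity : 0 ≤ Real.pi * w₁ ^ 2 / s ^ 2).trans hlt.le
    refine (latSD_le_iff hF (measurable_uncurry_funifL.comp measurable_prodMk_left)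
      (funifL_nonneg _) ?_ hδ).1 (hball _ ((le_mul_sqrt_div_pi_iff hs ht_nonneg hw₁).2 hlt.le))
    exact ne_top_of_le_ne_top ENNReal.one_ne_top (lintegral_funifL_le_one hn _)
  rw [latSD_le_iff hF (measurable_gaussD s) (gaussD_nonneg hs.le)
    (integrable_gaussD hs).lintegral_lt_top.ne (by positivity)]
  simp only [ofReal_gaussD_eq_lintegral_funifL hs]
  refine (uniformL1Dist_lintegral_le_add hF hmeas (fun t => lintegral_funifL_le_one hn _)
    measurableSet_Iic hlarge).trans_eq ?_
  rw [mul_add, ENNReal.ofReal_add (by positivity) (by positivity),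
    ENNReal.ofReal_mul zero_le_two, ENNReal.ofReal_mul zero_le_two, ENNReal.ofReal_ofNat,
    ofReal_measureReal]

lemma div_rpow_le_rpow_half {w₀ w r a : ℝ} (hw₀ : 0 < w₀) (hr : 0 < r) (ha : 0 ≤ a)
    (hw : w₀ / √r ≤ w) : (w₀ / w) ^ a ≤ r ^ (a / 2) := by
  have hw_pos : 0 < w := (by positivity : 0 < w₀ / √r).trans_le hw
  rw [Real.rpow_div_two_eq_sqrt _ hr.le]
  refine Real.rpow_le_rpow (by positivity) ?_ ha
  rwa [div_le_comm₀ hw_pos (by positivity)]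

lemma lt_div_sqrt {w r : ℝ} (hw : 0 < w) (hr : 0 < r) (hr' : r < 1) : w < w / √r :=
  (lt_div_iff₀ (Real.sqrt_pos.2 hr)).2
    (mul_lt_of_lt_one_right hw ((Real.sqrt_lt' one_pos).2 (by rwa [one_pow])))

lemma pi_mul_div_sqrt_sq_div {w₀ s d r : ℝ} (hw₀ : 0 < w₀) (hs : 0 < s) (hd : 0 < d)
    (hr : r = w₀ * √(2 * Real.pi / d) / s) :
    Real.pi * (w₀ / √r) ^ 2 / s ^ 2 = d / 2 * r := by
  have hr_pos : 0 < r := hr ▸ by positivity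
  have hr_sq : r ^ 2 = w₀ ^ 2 * (2 * Real.pi / d) / s ^ 2 := by
    rw [hr, div_pow, mul_pow, Real.sq_sqrt (by positivity)]
  rw [div_pow, Real.sq_sqrt hr_pos.le]
  field_simp at hr_sq ⊢
  linarith

end Smoothing

/-- Transfer from uniform-ball smoothing to Gaussian smoothing for a fixed full-rank
lattice `Λ` with fundamental domain `F`: if `Δ(u, f_unif,w^Λ) ≤ K (w₀/w)^{n/2}` for all
`w > w₀`, then with `s₀ = w₀ √(2π/n)`, for all `s > s₀` and `η = 1 − s₀/s`,
`Δ(u, D_s^Λ) ≤ exp(−η²n/8) + K (s₀/s)^{n/4}`. -/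
theorem gaussian_smoothing_from_uniform_ball {n : ℕ} (hn : 1 ≤ n)
    (Λ : Submodule ℤ (EuclideanSpace ℝ (Fin n))) [DiscreteTopology Λ] [IsZLattice ℝ Λ]
    (F : Set (EuclideanSpace ℝ (Fin n)))
    (hF : IsAddFundamentalDomain Λ F volume)
    (w₀ K : ℝ) (hw₀ : 0 < w₀) (hK : 0 ≤ K)
    (hsm : ∀ w : ℝ, w₀ < w → latSD Λ F (funifL n w) ≤ K * (w₀ / w) ^ ((n : ℝ) / 2)) :
    ∀ s : ℝ, w₀ * Real.sqrt (2 * Real.pi / n) < s →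
      latSD Λ F (gaussD n s) ≤
        Real.exp (-(1 - w₀ * Real.sqrt (2 * Real.pi / n) / s) ^ 2 * n / 8) +
          K * (w₀ * Real.sqrt (2 * Real.pi / n) / s) ^ ((n : ℝ) / 4) := by
  intro s hs
  have hn_pos : (0 : ℝ) < n := by exact_mod_cast hn
  have hs_pos : 0 < s := lt_of_le_of_lt (by positivity) hs
  set r := w₀ * √(2 * Real.pi / n) / s with hr_def
  have hr : 0 < r := by positivity
  have hr_lt : r < 1 := (div_lt_one hs_pos).2 hs
  have hball : ∀ w, w₀ / √r ≤ w → latSD Λ F (funifL n w) ≤ K * r ^ ((n : ℝ) / 4) := by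
    intro w hw
    have hpow := div_rpow_le_rpow_half hw₀ hr (a := (n : ℝ) / 2) (by positivity) hw
    rw [div_div, show (2 : ℝ) * 2 = 4 by norm_num] at hpow
    exact (hsm w ((lt_div_sqrt hw₀ hr hr_lt).trans_le hw)).trans
      (mul_le_mul_of_nonneg_left hpow hK)
  have htail : (gammaMeasure ((n : ℝ) / 2 + 1) 1).real (Set.Iic (n / 2 * r)) ≤
      Real.exp (-(1 - r) ^ 2 * n / 8) := by
    refine (ENNReal.toReal_le_of_le_ofReal (Real.exp_nonneg _)
      (gammaMeasure_Iic_mul_le (by positivity) hr hr_lt.le)).trans (Real.exp_le_exp.2 ?_)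
    linarith [mul_nonneg hn_pos.le (sq_nonneg (1 - r))]
  have hmix := latSD_gaussD_le (Nat.one_le_iff_ne_zero.1 hn) hF hs_pos (by positivity)
    (by positivity) hball
  rw [pi_mul_div_sqrt_sq_div hw₀ hs_pos hn_pos hr_def] at hmix
  exact hmix.trans (add_le_add_left htail _)
end
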